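/- Let Y_1, Y_2, ..., Y_n be real-valued random variables on a probability space and let p ∈ (0, 1). Suppose that for each i ∈ {1,...,n} and each natural number j, and for every event A in the σ-algebra generated by Y_1, ..., Y_{i-1} with Pr[A] > 0, we have Pr[Y_i ≥ j | A] ≤ p^j. Then the sum Y = Σ_{i=1}^n Y_i satisfies Pr[Y ≥ 2n] ≤ (4p)^n. -/

import Mathlib

/-!
Put `X i = ⌊Y i⌋₊`. Since `Y i < X i + 1`, the event `2n ≤ ∑ Y i` forces `n ≤ ∑ X i`, and the tail
hypothesis says exactly that `X i ≥ j` has probability at most `p ^ j` given the past.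

Induction on `m` then gives `Pr[X 1 + ⋯ + X m ≥ k] ≤ 2 ^ (m + k) * p ^ k` for every `k`
(`measure_le_sum_floor`): if `X 1 + ⋯ + X (m + 1) ≥ k`, there is some `j ≤ k` with
`X 1 + ⋯ + X m ≥ j` and `X (m + 1) ≥ k - j`, an event of probability at most
`2 ^ (m + j) * p ^ j * p ^ (k - j)`, and the union bound over `j` sums a geometric series.
The theorem is the case `m = k = n`.
-/

open MeasureTheory ProbabilityTheory Finset

/-- The multiplication rule: a bound on the conditional probability of `B` given `A` that is
only available when `A` has positive probability still bounds `μ (A ∩ B)`. -/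
lemma measure_inter_le_of_cond_le {Ω : Type*} [MeasurableSpace Ω] (μ : Measure Ω)
    [IsFiniteMeasure μ] {A B : Set Ω} (hA : MeasurableSet A) {c : ENNReal}
    (h : 0 < μ A → μ[|A] B ≤ c) : μ (A ∩ B) ≤ μ A * c := by
  rw [← cond_mul_eq_inter hA B μ, mul_comm]
  rcases (zero_le (a := μ A)).eq_or_lt with h0 | h0
  · simp [← h0]
  · gcongr
    exact h h0

lemma sum_range_two_pow_le (k : ℕ) :
    ∑ j ∈ Finset.range (k + 1), (2 : ENNReal) ^ j ≤ 2 ^ (k + 1) := by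
  have h : ∑ j ∈ Finset.range (k + 1), 2 ^ j ≤ 2 ^ (k + 1) :=
    (Nat.geomSum_lt le_rfl fun j hj => Finset.mem_range.mp hj).le
  exact_mod_cast h

/-- The tail bound for the sum of the integer parts, at every level `k`. The constant
`2 ^ (m + k)` is a crude bound on the number of ways to write `k` as an ordered sum of `m` naturals. -/
lemma measure_le_sum_floor {Ω : Type*} [MeasurableSpace Ω] (μ : Measure Ω)
    [IsProbabilityMeasure μ] (n : ℕ) (Y : ℕ → Ω → ℝ) (hmeas : ∀ i, Measurable (Y i))
    (q : ENNReal)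
    (htail : ∀ i ∈ Finset.Icc 1 n, ∀ j : ℕ, ∀ A : Set Ω,
      MeasurableSet[⨆ l ∈ Finset.Ico 1 i, MeasurableSpace.comap (Y l) inferInstance] A →
      0 < μ A → μ[|A] {ω | (j : ℝ) ≤ Y i ω} ≤ q ^ j)
    (m : ℕ) (hm : m ≤ n) (k : ℕ) :
    μ {ω | k ≤ ∑ i ∈ Finset.Icc 1 m, ⌊Y i ω⌋₊} ≤ 2 ^ (m + k) * q ^ k := by
  induction m generalizing k with
  | zero =>
    rcases Nat.eq_zero_or_pos k with rfl | hk
    · simp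
    · simp [hk.ne']
  | succ m ih =>
    have hpast (j : ℕ) :
        MeasurableSet[⨆ l ∈ Finset.Ico 1 (m + 1), MeasurableSpace.comap (Y l) inferInstance]
          {ω | j ≤ ∑ i ∈ Finset.Icc 1 m, ⌊Y i ω⌋₊} := by
      suffices h : Measurable[⨆ l ∈ Finset.Ico 1 (m + 1),
          MeasurableSpace.comap (Y l) inferInstance] fun ω => ∑ i ∈ Finset.Icc 1 m, ⌊Y i ω⌋₊ from
        h (measurableSet_Ici (a := j))
      refine Finset.measurable_sum _ fun i hi => ?_
      refine Nat.measurable_floor.comp ?_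
      refine Measurable.mono (comap_measurable (Y i)) ?_ le_rfl
      refine le_iSup₂ (f := fun l (_ : l ∈ Finset.Ico 1 (m + 1)) =>
        MeasurableSpace.comap (Y l) inferInstance) i ?_
      simp only [Finset.mem_Icc, Finset.mem_Ico] at hi ⊢
      omega
    have hle : (⨆ l ∈ Finset.Ico 1 (m + 1), MeasurableSpace.comap (Y l) inferInstance)
        ≤ (inferInstance : MeasurableSpace Ω) :=
      iSup₂_le fun l _ => (hmeas l).comap_le
    have hcover : {ω | k ≤ ∑ i ∈ Finset.Icc 1 (m + 1), ⌊Y i ω⌋₊} ⊆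
        ⋃ j ∈ Finset.range (k + 1), ({ω | j ≤ ∑ i ∈ Finset.Icc 1 m, ⌊Y i ω⌋₊} ∩
          {ω | k - j ≤ ⌊Y (m + 1) ω⌋₊}) := by
      intro ω hω
      simp only [Set.mem_ofPred_eq, Finset.sum_Icc_succ_top (Nat.le_add_left 1 m)] at hω
      simp only [Set.mem_iUnion, Finset.mem_range, Set.mem_inter_iff, Set.mem_ofPred_eq]
      exact ⟨min k (∑ i ∈ Finset.Icc 1 m, ⌊Y i ω⌋₊), by omega, by omega, by omega⟩
    have hstep (j : ℕ) (hj : j ∈ Finset.range (k + 1)) :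
        μ ({ω | j ≤ ∑ i ∈ Finset.Icc 1 m, ⌊Y i ω⌋₊} ∩ {ω | k - j ≤ ⌊Y (m + 1) ω⌋₊})
          ≤ 2 ^ m * q ^ k * 2 ^ j := by
      have hjk : j ≤ k := Nat.lt_succ_iff.mp (Finset.mem_range.mp hj)
      calc _ ≤ μ {ω | j ≤ ∑ i ∈ Finset.Icc 1 m, ⌊Y i ω⌋₊} * q ^ (k - j) := by
            refine measure_inter_le_of_cond_le μ (hle _ (hpast j)) fun hpos => ?_
            rcases Nat.eq_zero_or_pos (k - j) with h0 | h0
            · rw [h0, pow_zero]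
              exact (measure_mono (Set.subset_univ _)).trans
                (ProbabilityTheory.cond_isProbabilityMeasure hpos.ne').measure_univ.le
            · refine (measure_mono fun ω hω => ?_).trans
                (htail (m + 1) (by simp; omega) (k - j) _ (hpast j) hpos)
              exact (Nat.le_floor_iff' h0.ne').mp hω
        _ ≤ 2 ^ (m + j) * q ^ j * q ^ (k - j) := by
            gcongr
            exact ih (by omega) j
        _ = 2 ^ m * q ^ k * 2 ^ j := by
            rw [mul_assoc, ← pow_add, Nat.add_sub_cancel' hjk, pow_add]
            ring
    calc _ ≤ ∑ j ∈ Finset.range (k + 1), 2 ^ m * q ^ k * 2 ^ j :=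
          (measure_mono hcover).trans
            ((measure_biUnion_finset_le _ _).trans (Finset.sum_le_sum hstep))
      _ ≤ 2 ^ m * q ^ k * 2 ^ (k + 1) := by
          rw [← Finset.mul_sum]
          gcongr
          exact sum_range_two_pow_le k
      _ = 2 ^ (m + 1 + k) * q ^ k := by ring

/-- **Adaptive Chernoff bound for geometric random variables.** Suppose that for each
`i ∈ {1, ..., n}`, conditioned on any positive-probability event in the σ-algebra
generated by `Y 1, ..., Y (i-1)`, the variable `Y i` satisfies `Pr[Y i ≥ j] ≤ p^j` for
all naturals `j`. Then `Pr[∑_{i=1}^n Y i ≥ 2n] ≤ (4p)^n`. -/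
theorem adaptive_geometric_chernoff {Ω : Type*} [MeasureSpace Ω]
    [IsProbabilityMeasure (ℙ : Measure Ω)]
    (n : ℕ) (Y : ℕ → Ω → ℝ) (hmeas : ∀ i, Measurable (Y i))
    (p : ℝ) (hp : p ∈ Set.Ioo (0 : ℝ) 1)
    (htail : ∀ i ∈ Finset.Icc 1 n, ∀ j : ℕ, ∀ A : Set Ω,
      MeasurableSet[⨆ l ∈ Finset.Ico 1 i, MeasurableSpace.comap (Y l) inferInstance] A →
      0 < ℙ A →
      ℙ[|A] {ω | (j : ℝ) ≤ Y i ω} ≤ ENNReal.ofReal (p ^ j)) :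
    ℙ {ω | (2 * n : ℝ) ≤ ∑ i ∈ Finset.Icc 1 n, Y i ω}
      ≤ ENNReal.ofReal ((4 * p) ^ n) := by
  have hsub : {ω | (2 * n : ℝ) ≤ ∑ i ∈ Finset.Icc 1 n, Y i ω} ⊆
      {ω | n ≤ ∑ i ∈ Finset.Icc 1 n, ⌊Y i ω⌋₊} := by
    intro ω hω
    simp only [Set.mem_ofPred_eq] at hω ⊢
    have h : ∑ i ∈ Finset.Icc 1 n, Y i ω ≤ ∑ i ∈ Finset.Icc 1 n, ((⌊Y i ω⌋₊ : ℝ) + 1) :=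
      Finset.sum_le_sum fun i _ => (Nat.lt_floor_add_one _).le
    simp only [Finset.sum_add_distrib, Finset.sum_const, Nat.card_Icc, nsmul_eq_mul,
      Nat.add_sub_cancel, mul_one] at h
    have h' : (n : ℝ) ≤ ∑ i ∈ Finset.Icc 1 n, (⌊Y i ω⌋₊ : ℝ) := by linarith
    exact_mod_cast h'
  refine (measure_mono hsub).trans ?_
  refine (measure_le_sum_floor ℙ n Y hmeas (ENNReal.ofReal p) (fun i hi j A hA hpos => ?_)
    n le_rfl n).trans_eq ?_
  · rw [← ENNReal.ofReal_pow hp.1.le]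
    exact htail i hi j A hA hpos
  · rw [ENNReal.ofReal_pow (by linarith [hp.1]), ENNReal.ofReal_mul (by norm_num), mul_pow,
      ← two_mul, pow_mul]
    norm_num
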